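/- Suppose f \in L^1_+(R^d)\setminus\{0\} satisfies f * \psi_\eps(v) = \exp(\mu + \lambda^{(1)}\cdot v + (\lambda^{(2)}/2)|v|^2) for all v, where \lambda^{(2)} < 0 and \eps|\lambda^{(2)}| < 1. Then f is the Maxwellian f(v) = \rho (2\pi T)^{-d/2}\exp(-|v-u|^2/(2T)) with T = 1/|\lambda^{(2)}| - \eps > 0 and u = \lambda^{(1)}/|\lambda^{(2)}|. -/

import Mathlib

open MeasureTheory Real
open scoped RealInnerProductSpace

/-! A Gaussian of covariance `S I` with `ε < S` is the convolution with `ψ_ε` of the Gaussian of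
covariance `(S - ε) I` and the same mean. On the Fourier side this is the addition of exponents,
and since the transform of `ψ_ε` has no zeros it can be cancelled; injectivity of the Fourier
transform on `L¹` then identifies `f`. The temperature of the right-hand side is `S = 1 / |λ⁽²⁾|`,
which exceeds `ε` exactly when `ε |λ⁽²⁾| < 1`. -/

section

open Module (finrank)
open scoped FourierTransform Convolution SchwartzMap ContDiff

variable {E : Type*} [NormedAddCommGroup E] [InnerProductSpace ℝ E]

/-- The Maxwellian on `E` with mass `ρ`, mean velocity `u` and temperature `T`, as a function of the
velocity. It is meaningful for `0 < T` only; `maxwellian 1 0 ε` is the Gaussian density `ψ_ε`. -/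
noncomputable def maxwellian (ρ : ℝ) (u : E) (T : ℝ) (v : E) : ℝ :=
  ρ * (2 * π * T) ^ (-(finrank ℝ E : ℝ) / 2) * rexp (-‖v - u‖ ^ 2 / (2 * T))

theorem exp_quadratic_eq_maxwellian (μ : ℝ) (a v : E) {b : ℝ} (hb : 0 < b) :
    rexp (μ + ⟪a, v⟫ - b / 2 * ‖v‖ ^ 2) =
      maxwellian (rexp (μ + ‖a‖ ^ 2 / (2 * b)) * (2 * π * (1 / b)) ^ ((finrank ℝ E : ℝ) / 2))
        (b⁻¹ • a) (1 / b) v := by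
  have complete_square : μ + ⟪a, v⟫ - b / 2 * ‖v‖ ^ 2 =
      (μ + ‖a‖ ^ 2 / (2 * b)) + -‖v - b⁻¹ • a‖ ^ 2 / (2 * (1 / b)) := by
    rw [norm_sub_sq_real, inner_smul_right, norm_smul, mul_pow, Real.norm_eq_abs, sq_abs,
      real_inner_comm]
    field_simp
    ring
  have rpow_cancel : (2 * π * (1 / b)) ^ ((finrank ℝ E : ℝ) / 2) *
      (2 * π * (1 / b)) ^ (-(finrank ℝ E : ℝ) / 2) = 1 := by
    rw [← rpow_add (by positivity), neg_div, add_neg_cancel, rpow_zero]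
  rw [maxwellian, complete_square, exp_add, mul_assoc (rexp _), rpow_cancel, mul_one]

theorem ofReal_maxwellian (ρ : ℝ) (u : E) (T : ℝ) (v : E) :
    (maxwellian ρ u T v : ℂ) = ((ρ * (2 * π * T) ^ (-(finrank ℝ E : ℝ) / 2) : ℝ) : ℂ) *
      Complex.exp (-((2 * T)⁻¹ : ℝ) * ‖v - u‖ ^ 2) := by
  rw [maxwellian, Complex.ofReal_mul, Complex.ofReal_exp]
  push_cast
  ring_nf

variable [FiniteDimensional ℝ E] [MeasurableSpace E] [BorelSpace E]

theorem ae_eq_of_fourier_eq {F : Type*} [NormedAddCommGroup F] [NormedSpace ℂ F] [CompleteSpace F]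
    {f g : E → F} (hf : Integrable f) (hg : Integrable g) (hfg : 𝓕 f = 𝓕 g) : f =ᵐ[volume] g := by
  have self_adjoint (φ : 𝓢(E, ℂ)) {h : E → F} (hh : Integrable h) :
      ∫ x, 𝓕 (φ : E → ℂ) x • h x = ∫ ξ, φ ξ • 𝓕 h ξ := by
    simpa using! VectorFourier.integral_fourierIntegral_smul_eq_flip (L := innerₗ E)
      continuous_fourierChar continuous_inner φ.integrable hh
  have integral_schwartz (φ : 𝓢(E, ℂ)) : ∫ x, φ x • f x = ∫ x, φ x • g x := by
    obtain ⟨ψ, rfl⟩ : ∃ ψ : 𝓢(E, ℂ), 𝓕 ψ = φ :=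
      ⟨𝓕⁻ φ, FourierTransform.fourier_fourierInv_eq φ⟩
    rw [SchwartzMap.fourier_coe, self_adjoint ψ hf, self_adjoint ψ hg, hfg]
  refine ae_eq_of_integral_contDiff_smul_eq hf.locallyIntegrable hg.locallyIntegrable
    fun φ φ_smooth φ_supp ↦ ?_
  have φ_supp' : HasCompactSupport (Complex.ofRealCLM ∘ φ) := φ_supp.comp_left rfl
  have φ_smooth' : ContDiff ℝ ∞ (Complex.ofRealCLM ∘ φ) := by fun_prop
  simpa using integral_schwartz (φ_supp'.toSchwartzMap φ_smooth')

theorem fourier_comp_sub_right {F : Type*} [NormedAddCommGroup F] [NormedSpace ℂ F]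
    (f : E → F) (u ξ : E) : 𝓕 (fun v ↦ f (v - u)) ξ = 𝐞 (-⟪u, ξ⟫) • 𝓕 f ξ := by
  simpa [Function.comp_def, ← sub_eq_add_neg] using! congrFun
    (VectorFourier.fourierIntegral_comp_add_right 𝐞 volume (innerₗ E) f (-u)) ξ

theorem fourier_ofReal_convolution {f g : E → ℝ} (hf : Integrable f) (hg : Integrable g) (ξ : E) :
    𝓕 (fun v ↦ ((f ⋆[.mul ℝ ℝ] g) v : ℂ)) ξ =
      𝓕 (fun v ↦ (f v : ℂ)) ξ * 𝓕 (fun v ↦ (g v : ℂ)) ξ := by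
  have hf_ofReal : Integrable fun v ↦ (f v : ℂ) := hf.ofReal
  have hg_ofReal : Integrable fun v ↦ (g v : ℂ) := hg.ofReal
  have ofReal_convolution : (fun v ↦ ((f ⋆[.mul ℝ ℝ] g) v : ℂ)) =
      (fun v ↦ (f v : ℂ)) ⋆[.mul ℂ ℂ] fun v ↦ (g v : ℂ) := by
    ext v
    simp [convolution_def, ← integral_complex_ofReal]
  rw [ofReal_convolution, Real.fourier_mul_convolution_eq hf_ofReal hg_ofReal]

theorem integrable_maxwellian (ρ : ℝ) (u : E) {T : ℝ} (hT : 0 < T) :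
    Integrable (maxwellian ρ u T) := by
  have re_pos : 0 < (((2 * T)⁻¹ : ℝ) : ℂ).re := by rw [Complex.ofReal_re]; positivity
  have gaussian : Integrable fun v : E ↦ Complex.exp (-((2 * T)⁻¹ : ℝ) * ‖v‖ ^ 2) := by
    simpa using GaussianFourier.integrable_cexp_neg_mul_sq_norm_add re_pos 0 (0 : E)
  have complex_maxwellian : Integrable fun v ↦ (maxwellian ρ u T v : ℂ) := by
    simpa only [ofReal_maxwellian] using (gaussian.comp_sub_right u).const_mul _
  exact complex_maxwellian.re

theorem fourier_gaussian_normalized {T : ℝ} (hT : 0 < T) (ξ : E) :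
    (((2 * π * T) ^ (-(finrank ℝ E : ℝ) / 2) : ℝ) : ℂ) *
        𝓕 (fun v : E ↦ Complex.exp (-((2 * T)⁻¹ : ℝ) * ‖v‖ ^ 2)) ξ =
      Complex.exp (-2 * π ^ 2 * T * ‖ξ‖ ^ 2) := by
  have re_pos : 0 < (((2 * T)⁻¹ : ℝ) : ℂ).re := by rw [Complex.ofReal_re]; positivity
  have mass : ((π : ℂ) / ((2 * T)⁻¹ : ℝ)) ^ ((finrank ℝ E : ℂ) / 2) =
      (((2 * π * T) ^ ((finrank ℝ E : ℝ) / 2) : ℝ) : ℂ) := by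
    rw [Complex.ofReal_cpow (by positivity)]
    congr 1
    · push_cast
      field_simp
    · push_cast
      rfl
  rw [fourier_gaussian_innerProductSpace re_pos, mass, ← mul_assoc, ← Complex.ofReal_mul, neg_div,
    rpow_neg (by positivity), inv_mul_cancel₀ (by positivity), Complex.ofReal_one, one_mul]
  congr 1
  push_cast
  field_simp

theorem fourier_maxwellian (ρ : ℝ) (u : E) {T : ℝ} (hT : 0 < T) (ξ : E) :
    𝓕 (fun v ↦ (maxwellian ρ u T v : ℂ)) ξ =
      ρ * Complex.exp (-2 * π * Complex.I * ⟪u, ξ⟫ - 2 * π ^ 2 * T * ‖ξ‖ ^ 2) := by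
  set c : ℝ := (2 * π * T) ^ (-(finrank ℝ E : ℝ) / 2) with hc
  calc 𝓕 (fun v ↦ (maxwellian ρ u T v : ℂ)) ξ
      = ρ * c * 𝓕 (fun v ↦ Complex.exp (-((2 * T)⁻¹ : ℝ) * ‖v - u‖ ^ 2)) ξ := by
        simp only [ofReal_maxwellian, ← hc, Real.fourier_eq, Circle.smul_def, smul_eq_mul,
          Complex.ofReal_mul ρ c, ← integral_const_mul, mul_left_comm]
    _ = ρ * 𝐞 (-⟪u, ξ⟫) * (c * 𝓕 (fun v : E ↦ Complex.exp (-((2 * T)⁻¹ : ℝ) * ‖v‖ ^ 2)) ξ) := by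
        rw [fourier_comp_sub_right (fun v ↦ Complex.exp (-((2 * T)⁻¹ : ℝ) * ‖v‖ ^ 2)),
          Circle.smul_def, smul_eq_mul]
        ring
    _ = ρ * (𝐞 (-⟪u, ξ⟫) * Complex.exp (-2 * π ^ 2 * T * ‖ξ‖ ^ 2)) := by
        rw [fourier_gaussian_normalized hT, mul_assoc]
    _ = ρ * Complex.exp (-2 * π * Complex.I * ⟪u, ξ⟫ - 2 * π ^ 2 * T * ‖ξ‖ ^ 2) := by
        rw [Real.fourierChar_apply, ← Complex.exp_add]
        congr 2
        push_cast
        ring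

theorem fourier_maxwellian_mul_fourier_maxwellian (ρ σ : ℝ) (u w : E) {S T : ℝ}
    (hS : 0 < S) (hT : 0 < T) (ξ : E) :
    𝓕 (fun v ↦ (maxwellian ρ u S v : ℂ)) ξ * 𝓕 (fun v ↦ (maxwellian σ w T v : ℂ)) ξ =
      𝓕 (fun v ↦ (maxwellian (ρ * σ) (u + w) (S + T) v : ℂ)) ξ := by
  rw [fourier_maxwellian ρ u hS, fourier_maxwellian σ w hT, fourier_maxwellian _ _ (add_pos hS hT),
    mul_mul_mul_comm, ← Complex.exp_add, inner_add_left]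
  push_cast
  ring_nf

theorem ae_eq_maxwellian_of_convolution_eq {f : E → ℝ} (hf : Integrable f) {ρ ε S : ℝ} {u : E}
    (hε : 0 < ε) (hεS : ε < S)
    (hconv : f ⋆[.mul ℝ ℝ] maxwellian 1 0 ε = maxwellian ρ u S) :
    f =ᵐ[volume] maxwellian ρ u (S - ε) := by
  have hT : 0 < S - ε := sub_pos.2 hεS
  have fourier_eq : 𝓕 (fun v ↦ (f v : ℂ)) = 𝓕 (fun v ↦ (maxwellian ρ u (S - ε) v : ℂ)) := by
    ext ξ
    have fourier_ne_zero : 𝓕 (fun v ↦ (maxwellian 1 (0 : E) ε v : ℂ)) ξ ≠ 0 := by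
      simp [fourier_maxwellian _ _ hε]
    refine mul_right_cancel₀ fourier_ne_zero ?_
    rw [← fourier_ofReal_convolution hf (integrable_maxwellian 1 0 hε), hconv,
      fourier_maxwellian_mul_fourier_maxwellian _ _ _ _ hT hε, mul_one, add_zero, sub_add_cancel]
  filter_upwards [ae_eq_of_fourier_eq hf.ofReal (integrable_maxwellian ρ u hT).ofReal fourier_eq]
    with v hv using Complex.ofReal_injective hv

theorem deconvolution_maxwellian_general {ε : ℝ} (hε : 0 < ε) {f : E → ℝ} (hf : Integrable f)
    {μ lam2 : ℝ} {lam1 : E} (hlam2 : lam2 < 0) (hsmall : ε * |lam2| < 1)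
    (hconv : ∀ v, ∫ y, f y * maxwellian 1 0 ε (v - y) =
      rexp (μ + ⟪lam1, v⟫ + lam2 / 2 * ‖v‖ ^ 2)) :
    ∃ ρ : ℝ, 0 < ρ ∧ f =ᵐ[volume] maxwellian ρ (|lam2|⁻¹ • lam1) (1 / |lam2| - ε) := by
  have hpos : 0 < |lam2| := abs_pos.2 hlam2.ne
  have hε_lt : ε < 1 / |lam2| := (lt_div_iff₀ hpos).2 hsmall
  refine ⟨rexp (μ + ‖lam1‖ ^ 2 / (2 * |lam2|)) * (2 * π * (1 / |lam2|)) ^ ((finrank ℝ E : ℝ) / 2),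
    by positivity, ae_eq_maxwellian_of_convolution_eq hf hε hε_lt (funext fun v ↦ ?_)⟩
  calc (f ⋆[.mul ℝ ℝ] maxwellian 1 0 ε) v
      = rexp (μ + ⟪lam1, v⟫ + lam2 / 2 * ‖v‖ ^ 2) := hconv v
    _ = rexp (μ + ⟪lam1, v⟫ - |lam2| / 2 * ‖v‖ ^ 2) := by rw [abs_of_neg hlam2]; ring_nf
    _ = maxwellian _ (|lam2|⁻¹ • lam1) (1 / |lam2|) v := exp_quadratic_eq_maxwellian μ lam1 v hpos

end

/-- Gaussian deconvolution: if `f ∈ L¹₊ \ {0}` satisfies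
`(f ∗ ψ_ε)(v) = exp(μ + λ¹⋅v + (λ²/2)|v|²)` with `λ² < 0` and `ε|λ²| < 1`, then `f` is the
Maxwellian with temperature `T = 1/|λ²| − ε` and mean velocity `u = λ¹/|λ²|`. -/
theorem deconvolution_maxwellian (d : ℕ) (hd : 1 ≤ d) (ε : ℝ) (hε : 0 < ε)
    (ψ : EuclideanSpace ℝ (Fin d) → ℝ)
    (hψ : ψ = fun v => (2 * π * ε) ^ (-(d : ℝ) / 2) * Real.exp (-‖v‖ ^ 2 / (2 * ε)))
    (f : EuclideanSpace ℝ (Fin d) → ℝ) (hf : Integrable f) (hfpos : ∀ v, 0 ≤ f v)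
    (hfne : ¬ (f =ᵐ[volume] 0))
    (μ lam2 : ℝ) (lam1 : EuclideanSpace ℝ (Fin d))
    (hlam2 : lam2 < 0) (hsmall : ε * |lam2| < 1)
    (hconv : ∀ v, ∫ y, f y * ψ (v - y) =
      Real.exp (μ + ⟪lam1, v⟫ + lam2 / 2 * ‖v‖ ^ 2)) :
    ∃ ρ : ℝ, 0 < ρ ∧
      f =ᵐ[volume] fun v =>
        ρ * (2 * π * (1 / |lam2| - ε)) ^ (-(d : ℝ) / 2) *
          Real.exp (-‖v - |lam2|⁻¹ • lam1‖ ^ 2 / (2 * (1 / |lam2| - ε))) := by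
  have hψ_maxwellian : ψ = maxwellian 1 0 ε := by ext v; simp [hψ, maxwellian]
  simpa only [Filter.EventuallyEq, maxwellian, finrank_euclideanSpace_fin] using
    deconvolution_maxwellian_general hε hf hlam2 hsmall (hψ_maxwellian ▸ hconv)
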